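/- arXiv:1507.00118 — 2 statements merged into one kernel-verified Lean document; each statement's English description precedes it below -/
import Mathlib

section
/- Let C be an abelian category. Then the category Ind(C) of ind-objects of C is abelian, and the canonical functor ι : C → Ind(C) is fully faithful and exact. -/
open CategoryTheory CategoryTheory.Limits

/-!
An ind-object is a filtered colimit of representable presheaves, hence a left exact presheaf of
sets. Since left exact presheaves of sets on an additive category lift uniquely to left exact
presheaves of abelian groups, `Ind C` is preadditive.

Any morphism of `Ind C` is isomorphic to the image, under an exact functor `Ind.lim I`, of a
morphism of the abelian category `I ⥤ C`. Its coimage-image comparison is therefore the image of an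
isomorphism.
-/

universe v₁ v₂ u₁ u₂

section CoimageImageComparison

variable {A : Type u₁} [Category.{v₁} A] [HasZeroMorphisms A] [HasKernels A] [HasCokernels A]
variable {D : Type u₂} [Category.{v₂} D] [HasZeroMorphisms D] [HasKernels D] [HasCokernels D]

theorem isIso_coimageImageComparison_iff_of_arrow_iso {X Y X' Y' : D} {f : X ⟶ Y} {g : X' ⟶ Y'}
    (e : Arrow.mk f ≅ Arrow.mk g) :
    IsIso (Abelian.coimageImageComparison f) ↔ IsIso (Abelian.coimageImageComparison g) :=
  (MorphismProperty.isomorphisms D).arrow_mk_iso_iff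
    (Abelian.coimageImageComparisonFunctor.mapIso e)

theorem isIso_coimageImageComparison_map (F : A ⥤ D) [F.PreservesZeroMorphisms]
    [PreservesLimitsOfShape WalkingParallelPair F] [PreservesColimitsOfShape WalkingParallelPair F]
    {X Y : A} (f : X ⟶ Y) [IsIso (Abelian.coimageImageComparison f)] :
    IsIso (Abelian.coimageImageComparison (F.map f)) :=
  ((MorphismProperty.isomorphisms D).arrow_mk_iso_iff
    (Abelian.PreservesCoimageImageComparison.iso F f)).mp
      (inferInstanceAs (IsIso (F.map (Abelian.coimageImageComparison f))))

end CoimageImageComparison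

section Preadditive

theorem preservesFiniteLimits_of_isIndObject {C : Type u₁} [Category.{v₁} C]
    {P : Cᵒᵖ ⥤ Type v₁} (hP : IsIndObject P) : PreservesFiniteLimits P :=
  ObjectProperty.preservesFiniteLimits.prop_of_isColimit hP.presentation.isColimit
    fun i => inferInstanceAs (PreservesFiniteLimits (yoneda.obj (hP.presentation.F.obj i)))

/-- The preadditive structure on a full subcategory `D` of the left exact functors `E ⥤ Type v₁` on
an additive category `E`, transported from the left exact functors `E ⥤ AddCommGrpCat`. The
subcategory is given by a fully faithful functor `F`. -/
noncomputable abbrev preadditiveOfLeftExact {E : Type u₁} [Category.{v₁} E] [Preadditive E]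
    [HasFiniteBiproducts E] {D : Type u₂} [Category.{v₂} D] {F : D ⥤ E ⥤ Type v₁}
    (hF : F.FullyFaithful) (hexact : ∀ X, PreservesFiniteLimits (F.obj X)) : Preadditive D :=
  let liftFullyFaithful : ((leftExactFunctor E (Type v₁)).lift F hexact).FullyFaithful :=
    .ofCompFaithful (G := LeftExactFunctor.forget _ _) hF
  .ofFullyFaithful <| liftFullyFaithful.comp <|
    (AddCommGrpCat.leftExactFunctorForgetEquivalence E).fullyFaithfulInverse.comp
      (LeftExactFunctor.fullyFaithful _ _)

/-- The preadditive structure on the ind-objects of an additive category. It is not an instance, as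
it would compete with the one that Mathlib has for small `C`. -/
noncomputable abbrev preadditiveInd (C : Type u₁) [Category.{v₁} C] [Preadditive C]
    [HasFiniteCoproducts C] : Preadditive (Ind C) :=
  have : HasFiniteBiproducts Cᵒᵖ := .of_hasFiniteProducts
  preadditiveOfLeftExact Ind.inclusion.fullyFaithful fun X =>
    preservesFiniteLimits_of_isIndObject X.isIndObject_inclusion_obj

end Preadditive

section Abelian

variable {C : Type u₁} [Category.{v₁} C] [Abelian C]

theorem isIso_coimageImageComparison_ind [HasZeroMorphisms (Ind C)] {X Y : Ind C} (f : X ⟶ Y) :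
    IsIso (Abelian.coimageImageComparison f) := by
  obtain ⟨I, _, _, F, G, φ, ⟨e⟩⟩ := Ind.exists_nonempty_arrow_mk_iso_ind_lim (f := f)
  have : HasZeroObject (Ind C) := hasZeroObject_of_hasTerminal_object
  rw [isIso_coimageImageComparison_iff_of_arrow_iso e]
  exact isIso_coimageImageComparison_map (Ind.lim I) φ

/-- The abelian structure on the ind-objects of an abelian category, extending any given
preadditive structure. -/
noncomputable abbrev abelianInd [Preadditive (Ind C)] : Abelian (Ind C) :=
  have (X Y : Ind C) (f : X ⟶ Y) := isIso_coimageImageComparison_ind f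
  .ofCoimageImageComparisonIsIso

end Abelian

/-- If `C` is an abelian category, then `Ind C` is abelian, and the canonical
functor `ι = Ind.yoneda : C ⥤ Ind C` is fully faithful and exact. -/
theorem stmt_0 {C : Type u} [Category.{v} C] [Abelian C] :
    Nonempty (Abelian (Ind C)) ∧
    (Ind.yoneda : C ⥤ Ind C).Full ∧
    (Ind.yoneda : C ⥤ Ind C).Faithful ∧
    Nonempty (PreservesFiniteLimits (Ind.yoneda : C ⥤ Ind C)) ∧
    Nonempty (PreservesFiniteColimits (Ind.yoneda : C ⥤ Ind C)) := by
  let : Preadditive (Ind C) := preadditiveInd C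
  exact ⟨⟨abelianInd⟩, inferInstance, inferInstance, ⟨inferInstance⟩, ⟨inferInstance⟩⟩
end

section
/- Let C be an abelian category with enough injectives. Then Ind(C) has enough quasi-injectives: every object of Ind(C) admits a monomorphism into a quasi-injective object, where an object A ∈ Ind(C) is called quasi-injective if the functor Hom_{Ind(C)}(−, A), restricted to C, is exact. -/
open CategoryTheory CategoryTheory.Limits ZeroObject

namespace Stmt5

/-- An object `A ∈ Ind C` is quasi-injective if `Hom_{Ind C}(ι(−), A)` turns
every short exact sequence `0 → X₁ → X₂ → X₃ → 0` in `C` into an exact sequence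
`0 → Hom(ιX₃, A) → Hom(ιX₂, A) → Hom(ιX₁, A) → 0`:  precomposition with `ι(g)`
is injective, precomposition with `ι(f)` is surjective, and a morphism
`ιX₂ ⟶ A` factors through `ι(g)` if and only if its composite with `ι(f)` is
zero (i.e. factors through the image of the zero object). -/
def IsQuasiInjective {C : Type u} [Category.{v} C] [Abelian C] (A : Ind C) : Prop :=
  ∀ S : ShortComplex C, S.ShortExact →
    (Function.Injective
        (fun h : Ind.yoneda.obj S.X₃ ⟶ A => Ind.yoneda.map S.g ≫ h)) ∧
    (Function.Surjective
        (fun h : Ind.yoneda.obj S.X₂ ⟶ A => Ind.yoneda.map S.f ≫ h)) ∧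
    (∀ h : Ind.yoneda.obj S.X₂ ⟶ A,
      (∃ h' : Ind.yoneda.obj S.X₃ ⟶ A, h = Ind.yoneda.map S.g ≫ h') ↔
      (∃ v : Ind.yoneda.obj (0 : C) ⟶ A,
        Ind.yoneda.map S.f ≫ h = Ind.yoneda.map (0 : S.X₁ ⟶ (0 : C)) ≫ v))

/-!
Write `ι : C ⥤ Ind C` for the embedding. An ind-object `A` is a small filtered colimit of objects
`ι Xⱼ`. Embed each `Xⱼ` into an injective object `Iⱼ` of `C` and push out the monomorphism
`∐ ι Xⱼ ⟶ ∐ ι Iⱼ` along `∐ ι Xⱼ ⟶ A`. This gives a monomorphism `A ⟶ B`. Since `ι X` is finitely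
presentable, every `ι X ⟶ A` factors through some `ι Xⱼ`, so after composition with `A ⟶ B` it
factors through `ι Iⱼ` and hence extends along every `ι i` with `i : X ⟶ Y` a monomorphism of `C`.
Iterate this countably often. A morphism from `ι X` to the colimit factors through a finite stage
and extends one stage later, so the colimit is quasi-injective.
-/

section Hom

variable {C : Type u} [Category.{v} C]

/-- The Yoneda lemma for ind-objects: `Hom(ι X, A)` is the value at `X` of the presheaf underlying
`A`, naturally in both variables. -/
noncomputable def yonedaOpCompCoyonedaIso :
    (Ind.yoneda (C := C)).op ⋙ coyoneda ≅ (Ind.inclusion C).flip :=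
  NatIso.ofComponents
    (fun X => NatIso.ofComponents
      (fun _ => Equiv.toIso <| Ind.inclusion.fullyFaithful.homEquiv.trans <|
        ((Ind.yonedaCompInclusion.app X.unop).homCongr (Iso.refl _)).trans yonedaEquiv)
      (fun k => by ext; simpa using yonedaEquiv_comp (_ ≫ _) _))
    (fun {X _} f => by
      ext A h
      simpa using (yonedaEquiv_naturality
        (Ind.yonedaCompInclusion.inv.app X.unop ≫ (Ind.inclusion C).map h) f.unop).symm)

instance isFinitelyPresentable_yoneda_obj (X : C) :
    IsFinitelyPresentable.{v} (Ind.yoneda.obj X) := by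
  rw [isFinitelyPresentable_iff_preservesFilteredColimits]
  exact ⟨fun J _ _ => preservesColimitsOfShape_of_natIso
    (F := Ind.inclusion C ⋙ (evaluation Cᵒᵖ (Type v)).obj (.op X))
    (yonedaOpCompCoyonedaIso.app (.op X)).symm⟩

lemma preservesFiniteLimits_inclusion_obj [HasFiniteColimits C] (A : Ind C) :
    PreservesFiniteLimits ((Ind.inclusion C).obj A) :=
  have : PreservesFiniteLimits (Ind.yoneda (C := C)).op := preservesFiniteLimits_op _
  preservesFiniteLimits_of_natIso (F := Ind.yoneda.op ⋙ yoneda.obj A)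
    (((flipFunctor _ _ _).mapIso yonedaOpCompCoyonedaIso).app A)

end Hom

section Abelian

lemma isIso_coimageImageComparison_of_arrowIso_map {D E : Type*} [Category* D] [Category* E]
    [Preadditive D] [HasKernels D] [HasCokernels D] [Abelian E]
    (L : E ⥤ D) [L.PreservesZeroMorphisms] [PreservesLimitsOfShape WalkingParallelPair L]
    [PreservesColimitsOfShape WalkingParallelPair L]
    {X Y : D} {f : X ⟶ Y} {X' Y' : E} {φ : X' ⟶ Y'} (e : Arrow.mk f ≅ Arrow.mk (L.map φ)) :
    IsIso (Abelian.coimageImageComparison f) := by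
  let comparisonIso : Arrow.mk (L.map (Abelian.coimageImageComparison φ)) ≅
      Arrow.mk (Abelian.coimageImageComparison f) :=
    Abelian.PreservesCoimageImageComparison.iso L φ ≪≫
      Abelian.coimageImageComparisonFunctor.mapIso e.symm
  rw [Arrow.isIso_iff_isIso_of_isIso comparisonIso.inv]
  infer_instance

variable {C : Type u} [Category.{v} C]

variable (C) in
/-- The embedding of `Ind C` into left exact presheaves, through which `Ind C` inherits its additive
structure. -/
noncomputable def toLeftExactFunctor [HasFiniteColimits C] :
    Ind C ⥤ LeftExactFunctor Cᵒᵖ (Type v) :=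
  ObjectProperty.lift _ (Ind.inclusion C) preservesFiniteLimits_inclusion_obj

attribute [local instance] HasFiniteBiproducts.of_hasFiniteCoproducts in
noncomputable scoped instance [Preadditive C] [HasFiniteColimits C] : Preadditive (Ind C) :=
  let fullyFaithful : (toLeftExactFunctor C).FullyFaithful :=
    .ofCompFaithful (G := ObjectProperty.ι _) Ind.inclusion.fullyFaithful
  .ofFullyFaithful <| (fullyFaithful.comp
    (AddCommGrpCat.leftExactFunctorForgetEquivalence Cᵒᵖ).symm.fullyFaithfulFunctor).comp
      (ObjectProperty.fullyFaithfulι _)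

scoped instance [Preadditive C] [HasFiniteColimits C] : HasFiniteBiproducts (Ind C) :=
  .of_hasFiniteCoproducts

noncomputable scoped instance [Abelian C] : Abelian (Ind C) :=
  have {A B : Ind C} (f : A ⟶ B) : IsIso (Abelian.coimageImageComparison f) := by
    obtain ⟨I, _, _, _, _, _, ⟨e⟩⟩ := Ind.exists_nonempty_arrow_mk_iso_ind_lim (f := f)
    exact isIso_coimageImageComparison_of_arrowIso_map (Ind.lim I) e
  .ofCoimageImageComparisonIsIso

end Abelian

section General

variable {D : Type*} [Category* D]

lemma exists_eq_map_comp_iff_map_comp_eq_zero {C : Type*} [Category* C] [Preadditive C]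
    [Balanced C] [HasZeroMorphisms D] (F : C ⥤ D) [F.PreservesZeroMorphisms]
    {S : ShortComplex C} (hS : S.Exact) [Epi S.g]
    [PreservesColimit (parallelPair S.f 0) F] {A : D} (h : F.obj S.X₂ ⟶ A) :
    (∃ h' : F.obj S.X₃ ⟶ A, h = F.map S.g ≫ h') ↔ F.map S.f ≫ h = 0 := by
  refine ⟨?_, fun hzero => ?_⟩
  · rintro ⟨h', rfl⟩
    rw [← F.map_comp_assoc, S.zero, F.map_zero, zero_comp]
  · obtain ⟨h', fac⟩ := CokernelCofork.IsColimit.desc'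
      (CokernelCofork.mapIsColimit _ hS.gIsCokernel F) h hzero
    exact ⟨h', fac.symm⟩

lemma exists_mono_forall_exists_comp_eq [Abelian D] {I : Type*} [HasCoproductsOfShape I D]
    [(MorphismProperty.monomorphisms D).IsStableUnderCoproductsOfShape I]
    {X Y : I → D} (s : ∀ i, X i ⟶ Y i) [∀ i, Mono (s i)] {A : D} (t : ∀ i, X i ⟶ A) :
    ∃ (B : D) (m : A ⟶ B), Mono m ∧ ∀ i, ∃ g : Y i ⟶ B, s i ≫ g = t i ≫ m := by
  refine ⟨pushout (Limits.Sigma.map s) (Sigma.desc t), pushout.inr _ _, inferInstance,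
    fun i => ⟨Sigma.ι Y i ≫ pushout.inl _ _, ?_⟩⟩
  rw [← Sigma.ι_map_assoc, pushout.condition, Sigma.ι_desc_assoc]

lemma exists_functor_nat_forall_map_succ (W : MorphismProperty D)
    (hW : ∀ X : D, ∃ (Y : D) (f : X ⟶ Y), W f) (A : D) :
    ∃ F : ℕ ⥤ D, F.obj 0 = A ∧ ∀ n : ℕ, W (F.map (homOfLE (n.le_add_right 1))) := by
  choose next f hf using hW
  let X : ℕ → D := fun n => n.rec A fun _ => next
  refine ⟨Functor.ofSequence (X := X) fun n => f (X n), rfl, fun n => ?_⟩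
  rw [Functor.ofSequence_map_homOfLE_succ]
  exact hf (X n)

lemma mono_ι_app_zero_of_isColimit [HasFilteredColimitsOfSize.{w, w} D] [AB5OfSize.{w, w} D]
    {F : ℕ ⥤ D} (hF : ∀ n : ℕ, Mono (F.map (homOfLE (n.le_add_right 1))))
    {c : Cocone F} (hc : IsColimit c) : Mono (c.ι.app 0) :=
  have := MorphismProperty.IsStableUnderTransfiniteComposition.shrink₀.{w}
    (MorphismProperty.monomorphisms D)
  MorphismProperty.transfiniteCompositionsOfShape_le (MorphismProperty.monomorphisms D) ℕ _
    ⟨{ F := F, isoBot := Iso.refl _, incl := c.ι, isColimit := hc, map_mem := fun n _ => hF n }⟩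

end General

section QuasiInjective

variable {C : Type u} [Category.{v} C]

variable (C) in
/-- The morphisms `m : A ⟶ B` of `Ind C` such that, for every monomorphism `i : X ⟶ Y` of `C` and
every `f : ι X ⟶ A`, the composite `f ≫ m` extends along `ι i`. This is quasi-injectivity of an
object relative to a morphism: see `isQuasiInjective_iff_extendsAlongMonos_id`. -/
def extendsAlongMonos : MorphismProperty (Ind C) := fun A B m =>
  ∀ ⦃X Y : C⦄ (i : X ⟶ Y) [Mono i] (f : Ind.yoneda.obj X ⟶ A),
    ∃ g : Ind.yoneda.obj Y ⟶ B, Ind.yoneda.map i ≫ g = f ≫ m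

lemma exists_map_comp_presentation_ι_eq (A : Ind C) {X : C} (f : Ind.yoneda.obj X ⟶ A) :
    ∃ (j : A.presentation.I) (g : X ⟶ A.presentation.F.obj j), Ind.yoneda.map g ≫
      colimit.ι (A.presentation.F ⋙ Ind.yoneda) j ≫ A.colimitPresentationCompYoneda.hom = f := by
  obtain ⟨j, g, hg⟩ := IsFinitelyPresentable.exists_hom_of_isColimit
    (colimit.isColimit (A.presentation.F ⋙ Ind.yoneda)) (f ≫ A.colimitPresentationCompYoneda.inv)
  obtain ⟨g, rfl⟩ := Ind.yoneda.map_surjective g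
  exact ⟨j, g, by simpa [Iso.eq_comp_inv] using hg⟩

variable [Abelian C]

lemma isQuasiInjective_iff_extendsAlongMonos_id {A : Ind C} :
    IsQuasiInjective A ↔ extendsAlongMonos C (𝟙 A) := by
  refine ⟨fun h X Y i _ f => ?_, fun h S hS => ⟨?_, fun f => ?_, fun f => ?_⟩⟩
  · obtain ⟨g, hg⟩ := (h (.mk i (cokernel.π i) (cokernel.condition i))
      { exact := ShortComplex.exact_cokernel i }).2.1 f
    exact ⟨g, by simpa using hg⟩
  · have := hS.epi_g
    exact fun _ _ => (cancel_epi (Ind.yoneda.map S.g)).1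
  · have := hS.mono_f
    simpa using h S.f f
  · have := hS.epi_g
    simpa using exists_eq_map_comp_iff_map_comp_eq_zero Ind.yoneda hS.exact f

lemma exists_mono_extendsAlongMonos [EnoughInjectives C] (A : Ind C) :
    ∃ (B : Ind C) (m : A ⟶ B), Mono m ∧ extendsAlongMonos C m := by
  let P := A.presentation
  have := AB4.of_AB5 (Ind C)
  obtain ⟨B, m, hm, hB⟩ := exists_mono_forall_exists_comp_eq
    (fun j => Ind.yoneda.map (Injective.ι (P.F.obj j)))
    (fun j => colimit.ι (P.F ⋙ Ind.yoneda) j ≫ A.colimitPresentationCompYoneda.hom)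
  refine ⟨B, m, hm, fun X Y i _ f => ?_⟩
  obtain ⟨j, g, rfl⟩ := exists_map_comp_presentation_ι_eq A f
  obtain ⟨b, hb⟩ := hB j
  refine ⟨Ind.yoneda.map (Injective.factorThru (g ≫ Injective.ι _) i) ≫ b, ?_⟩
  rw [← Functor.map_comp_assoc, Injective.comp_factorThru, Functor.map_comp_assoc, hb]
  simp only [Category.assoc, P]

lemma isQuasiInjective_of_isColimit {J : Type*} [Category* J] [EssentiallySmall.{v} J]
    [IsFiltered J] {F : J ⥤ Ind C} {c : Cocone F} (hc : IsColimit c)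
    (hF : ∀ j, ∃ (k : J) (u : j ⟶ k), extendsAlongMonos C (F.map u)) :
    IsQuasiInjective c.pt := by
  rw [isQuasiInjective_iff_extendsAlongMonos_id]
  intro X Y i _ f
  have := Cardinal.fact_isRegular_aleph0
  have : IsCardinalFiltered J Cardinal.aleph0 := (isCardinalFiltered_aleph0_iff J).2 inferInstance
  obtain ⟨j, f', rfl⟩ := IsCardinalPresentable.exists_hom_of_isColimit Cardinal.aleph0 hc f
  obtain ⟨k, u, hu⟩ := hF j
  obtain ⟨g, hg⟩ := hu i f'
  exact ⟨g ≫ c.ι.app k, by rw [reassoc_of% hg, c.w, Category.comp_id]⟩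

end QuasiInjective

/-- If the abelian category `C` has enough injectives, then `Ind C` has enough
quasi-injectives: every ind-object admits a monomorphism into a quasi-injective
ind-object. -/
theorem stmt_5 {C : Type u} [Category.{v} C] [Abelian C] [EnoughInjectives C]
    (A : Ind C) :
    ∃ (Q : Ind C) (m : A ⟶ Q), Mono m ∧ IsQuasiInjective Q := by
  obtain ⟨F, rfl, hF⟩ := exists_functor_nat_forall_map_succ
    (MorphismProperty.monomorphisms (Ind C) ⊓ extendsAlongMonos C) exists_mono_extendsAlongMonos A
  have : HasColimitsOfShape ℕ (Ind C) := hasColimitsOfShape_of_essentiallySmall ℕ (Ind C)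
  exact ⟨colimit F, colimit.ι F 0,
    mono_ι_app_zero_of_isColimit (fun n => (hF n).1) (colimit.isColimit F),
    isQuasiInjective_of_isColimit (colimit.isColimit F) fun n => ⟨n + 1, _, (hF n).2⟩⟩

end Stmt5
end
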